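/- arXiv:2104.06301 — 3 statements merged into one kernel-verified Lean document; each statement's English description precedes it below -/
import Mathlib

section
/- Let n, k, q ∈ ℕ with n ≥ 10, 2q ≤ n − 10, and k ≤ 10·2^{2q+2}, and let g : {0,1}^{3k} → {0,1} be any function. Then the number of functions f : {0,1}^{2n} → {0,1} for which there exist functions f_A : {0,1}^n → {0,1}^k, f_B : {0,1}^n → {0,1}^k and a string λ ∈ {0,1}^k such that g(f_A(x), f_B(y), λ) = f(x,y) holds for at least (3/4)·2^{2n} of the 2^{2n} pairs (x,y) ∈ {0,1}^n × {0,1}^n, is strictly less than 2^{2^{2n} − 2^n}. Equivalently, a uniformly random f : {0,1}^{2n} → {0,1} satisfies, with probability greater than 1 − 2^{−2^n}, that for every choice of f_A, f_B, λ the equality g(f_A(x), f_B(y), λ) = f(x,y) holds on fewer than 3/4 of all pairs (x,y). -/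
/-- Chernoff-type bound on a Hamming ball: few Boolean functions agree with `h` in at least `t`
places. -/
theorem card_agree_mul_three_pow_le {α : Type*} [Fintype α] (h : α → Bool) (t : ℕ) :
    Nat.card {f : α → Bool // t ≤ Nat.card {p // h p = f p}} * 3 ^ t ≤ 4 ^ Fintype.card α := by
  classical
  have weight (f : α → Bool) :
      3 ^ Nat.card {p // h p = f p} = ∏ p, if h p = f p then 3 else 1 := by
    rw [Finset.prod_ite, Finset.prod_const, Finset.prod_const_one, mul_one,
      Nat.card_eq_fintype_card, Fintype.card_subtype]
  have total : ∑ f : α → Bool, 3 ^ Nat.card {p // h p = f p} = 4 ^ Fintype.card α := by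
    simp_rw [weight]
    rw [← Fintype.prod_sum (fun p b => if h p = b then 3 else 1)]
    have point (p : α) : ∑ b : Bool, (if h p = b then 3 else 1) = 4 := by
      cases h p <;> simp
    simp_rw [point]
    simp
  rw [← total, Nat.card_eq_fintype_card, Fintype.card_subtype, ← smul_eq_mul]
  refine (Finset.card_nsmul_le_sum _ (fun f => 3 ^ Nat.card {p // h p = f p}) _ ?_).trans
    (Finset.sum_le_sum_of_subset (Finset.filter_subset _ _))
  intro f hf
  exact Nat.pow_le_pow_right (by norm_num) (Finset.mem_filter.mp hf).2

/-- Union bound: few functions agree in at least `t` places with some member of the family `h`. -/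
theorem card_exists_agree_mul_three_pow_le {α ι : Type*} [Fintype α] [Fintype ι]
    (h : ι → α → Bool) (t : ℕ) :
    Nat.card {f : α → Bool // ∃ i, t ≤ Nat.card {p // h i p = f p}} * 3 ^ t ≤
      Fintype.card ι * 4 ^ Fintype.card α := by
  classical
  have union : Nat.card {f : α → Bool // ∃ i, t ≤ Nat.card {p // h i p = f p}} ≤
      ∑ i, Nat.card {f : α → Bool // t ≤ Nat.card {p // h i p = f p}} := by
    rw [← Nat.card_sigma]
    refine Nat.card_le_card_of_surjective
      (fun x : Σ i, {f : α → Bool // t ≤ Nat.card {p // h i p = f p}} =>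
        ⟨x.2.1, x.1, x.2.2⟩) ?_
    rintro ⟨f, i, hf⟩
    exact ⟨⟨i, f, hf⟩, rfl⟩
  calc _ ≤ (∑ i, Nat.card {f : α → Bool // t ≤ Nat.card {p // h i p = f p}}) * 3 ^ t :=
        Nat.mul_le_mul_right _ union
    _ = ∑ i, Nat.card {f : α → Bool // t ≤ Nat.card {p // h i p = f p}} * 3 ^ t :=
        Finset.sum_mul ..
    _ ≤ ∑ _i : ι, 4 ^ Fintype.card α :=
        Finset.sum_le_sum fun i _ => card_agree_mul_three_pow_le (h i) t
    _ = _ := by simp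

theorem lt_two_pow_of_mul_three_pow_le {c e m x : ℕ} (hx : x ≤ 4 * m)
    (hm : 2 * e + 2 * x < m) (hc : c * 3 ^ (3 * m) ≤ 2 ^ e * 4 ^ (4 * m)) :
    c < 2 ^ (4 * m - x) := by
  by_contra! hle
  have base : 2 ^ (9 * m) ≤ (3 ^ (3 * m)) ^ 2 := by
    calc 2 ^ (9 * m) = 512 ^ m := by rw [pow_mul]; norm_num
      _ ≤ 729 ^ m := Nat.pow_le_pow_left (by norm_num) m
      _ = (3 ^ (3 * m)) ^ 2 := by
        rw [← pow_mul, show 3 * m * 2 = 6 * m by ring, pow_mul]; norm_num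
  have key : 2 ^ (2 * (4 * m - x) + 9 * m) ≤ 2 ^ (2 * e + 16 * m) := by
    calc 2 ^ (2 * (4 * m - x) + 9 * m) = (2 ^ (4 * m - x)) ^ 2 * 2 ^ (9 * m) := by
          rw [pow_add, mul_comm 2, pow_mul]
      _ ≤ c ^ 2 * (3 ^ (3 * m)) ^ 2 := by gcongr
      _ = (c * 3 ^ (3 * m)) ^ 2 := (mul_pow ..).symm
      _ ≤ (2 ^ e * 4 ^ (4 * m)) ^ 2 := by gcongr
      _ = 2 ^ (2 * e + 16 * m) := by
        rw [show (4 : ℕ) = 2 ^ 2 by norm_num, ← pow_mul, ← pow_add, ← pow_mul]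
        congr 1; ring
  have := (Nat.pow_le_pow_iff_right (by norm_num)).mp key
  omega

/-- counting lemma: for `n ≥ 10`, `q ≤ n/2 − 5`, `k ≤ 10·2^(2q+2)` and any
fixed `g : {0,1}^(3k) → {0,1}`, the number of functions `f : {0,1}^(2n) → {0,1}` that
agree with some compressed function `(x,y) ↦ g(f_A(x), f_B(y), λ)` on at least `3/4` of
all input pairs is strictly less than `2^(2^(2n) − 2^n)`. -/
theorem stmt_4 (n k q : ℕ) (hn : 10 ≤ n) (hq : 2 * q ≤ n - 10)
    (hk : k ≤ 10 * 2 ^ (2 * q + 2))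
    (g : (Fin k → Bool) → (Fin k → Bool) → (Fin k → Bool) → Bool) :
    Nat.card {f : (Fin n → Bool) → (Fin n → Bool) → Bool //
      ∃ fA fB : (Fin n → Bool) → (Fin k → Bool), ∃ lam : Fin k → Bool,
        3 * 2 ^ (2 * n) ≤
          4 * Nat.card {p : (Fin n → Bool) × (Fin n → Bool) //
                g (fA p.1) (fB p.2) lam = f p.1 p.2}} <
      2 ^ (2 ^ (2 * n) - 2 ^ n) := by
  obtain ⟨m, hm⟩ : ∃ m, 2 ^ (2 * n) = 4 * m :=
    ⟨2 ^ (2 * n - 2), by rw [show 2 * n = 2 + (2 * n - 2) by omega, pow_add]; norm_num⟩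
  have hsq : 4 * m = 2 ^ n * 2 ^ n := by rw [← hm, two_mul, pow_add]
  have hX : 1024 ≤ 2 ^ n := by
    simpa using Nat.pow_le_pow_right (n := 2) (by norm_num) hn
  have hkX : 128 * k ≤ 5 * 2 ^ n := by
    have : 2 ^ (2 * q + 10) ≤ 2 ^ n := Nat.pow_le_pow_right (by norm_num) (by omega)
    rw [pow_add] at this hk
    omega
  let ι := ((Fin n → Bool) → (Fin k → Bool)) × ((Fin n → Bool) → (Fin k → Bool)) × (Fin k → Bool)
  let h (i : ι) (p : (Fin n → Bool) × (Fin n → Bool)) : Bool := g (i.1 p.1) (i.2.1 p.2) i.2.2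
  have hι : Fintype.card ι = 2 ^ (2 * k * 2 ^ n + k) := by
    simp only [ι, Fintype.card_prod, Fintype.card_fun, Fintype.card_bool, Fintype.card_fin]
    rw [← pow_mul, ← pow_add, ← pow_add]
    congr 1; ring
  have hα : Fintype.card ((Fin n → Bool) × (Fin n → Bool)) = 4 * m := by
    simp [hsq]
  have hcount := card_exists_agree_mul_three_pow_le h (3 * m)
  rw [hι, hα] at hcount
  rw [hm]
  refine lt_of_le_of_lt ?_ (lt_two_pow_of_mul_three_pow_le (by nlinarith) (by nlinarith) hcount)
  refine Nat.card_le_card_of_injective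
    (fun f => ⟨fun p => f.1 p.1 p.2, ?_⟩) ?_
  · obtain ⟨f, fA, fB, lam, hf⟩ := f
    exact ⟨(fA, fB, lam), by dsimp only [h]; omega⟩
  · intro f f' hff
    ext x y
    exact congrFun (congrArg Subtype.val hff) (x, y)
end

section
/- Let ρ be a density matrix on ℂ² ⊗ ℂ² (i.e., a positive semidefinite 4×4 complex matrix of trace 1) and let δ > 0. Define p₁ := ⟨Ω|ρ|Ω⟩ with Ω = (|00⟩+|11⟩)/√2, and p₂ := (1/2)(⟨++|ρ|++⟩ + ⟨−−|ρ|−−⟩) + (1/2)(⟨00|ρ|00⟩ + ⟨11|ρ|11⟩), where |±⟩ = (|0⟩±|1⟩)/√2. Then: (1) if p₁ ≥ 1 − δ then p₂ ≥ 1 − δ; and (2) if p₂ ≥ 1 − δ then p₁ ≥ 1 − 2δ. -/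
noncomputable section

namespace Stmt7

/-- The maximally entangled state `Ω = (|00⟩+|11⟩)/√2`. -/
def Omega : Fin 2 × Fin 2 → ℂ := fun p => if p.1 = p.2 then (1 / (Real.sqrt 2 : ℝ) : ℂ) else 0

/-- Computational basis vector `|r a⟩`. -/
def ket (r a : Fin 2) : Fin 2 × Fin 2 → ℂ := fun p => if p = (r, a) then 1 else 0

/-- `|++⟩`. -/
def pp : Fin 2 × Fin 2 → ℂ := fun _ => (1 / 2 : ℂ)

/-- `|−−⟩`. -/
def mm : Fin 2 × Fin 2 → ℂ := fun p => if p.1 = p.2 then (1 / 2 : ℂ) else (-(1 / 2) : ℂ)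

/-- The expectation value `⟨v|ρ|v⟩` (its real part). -/
def expec (ρ : Matrix (Fin 2 × Fin 2) (Fin 2 × Fin 2) ℂ) (v : Fin 2 × Fin 2 → ℂ) : ℝ :=
  (∑ i, ∑ j, (starRingEnd ℂ) (v i) * ρ i j * v j).re

open scoped ComplexOrder

theorem expec_nonneg {ρ : Matrix (Fin 2 × Fin 2) (Fin 2 × Fin 2) ℂ} (hρ : ρ.PosSemidef)
    (v : Fin 2 × Fin 2 → ℂ) : 0 ≤ expec ρ v := by
  have h := (Complex.le_def.mp (hρ.dotProduct_mulVec_nonneg v)).1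
  simpa [expec, dotProduct, Matrix.mulVec, Finset.mul_sum, mul_assoc] using h

theorem expec_Omega (ρ : Matrix (Fin 2 × Fin 2) (Fin 2 × Fin 2) ℂ) :
    expec ρ Omega = (1 / 2) * expec ρ (ket 0 0 + ket 1 1) := by
  have hsq : (Real.sqrt 2)⁻¹ * (Real.sqrt 2)⁻¹ = 1 / 2 := by
    rw [← mul_inv, Real.mul_self_sqrt (by norm_num)]; norm_num
  simp [expec, Omega, ket, Fintype.sum_prod_type, Fin.sum_univ_two, ← Complex.ofReal_inv]
  linear_combination ((ρ (0, 0) (0, 0)).re + (ρ (0, 0) (1, 1)).re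
    + (ρ (1, 1) (0, 0)).re + (ρ (1, 1) (1, 1)).re) * hsq

/-- The four (unnormalized) Bell vectors resolve the identity. -/
theorem sum_expec_bell (ρ : Matrix (Fin 2 × Fin 2) (Fin 2 × Fin 2) ℂ) :
    expec ρ (ket 0 0 + ket 1 1) + expec ρ (ket 0 0 - ket 1 1)
      + expec ρ (ket 0 1 + ket 1 0) + expec ρ (ket 0 1 - ket 1 0) = 2 * ρ.trace.re := by
  simp [expec, ket, Matrix.trace, Fintype.sum_prod_type, Fin.sum_univ_two]
  ring

/-- The local test in terms of the (unnormalized) Bell vectors. -/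
theorem local_test_eq_bell (ρ : Matrix (Fin 2 × Fin 2) (Fin 2 × Fin 2) ℂ) :
    (1 / 2) * (expec ρ pp + expec ρ mm) + (1 / 2) * (expec ρ (ket 0 0) + expec ρ (ket 1 1))
      = (1 / 2) * expec ρ (ket 0 0 + ket 1 1) + (1 / 4) * expec ρ (ket 0 0 - ket 1 1)
        + (1 / 4) * expec ρ (ket 0 1 + ket 1 0) := by
  simp [expec, ket, pp, mm, Fintype.sum_prod_type, Fin.sum_univ_two]
  ring

/-- equivalence (up to a factor 2 in the rejection probability) of the
Bell-measurement test M1 and the local test M2 on a two-qubit density matrix. -/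
theorem stmt_7 (ρ : Matrix (Fin 2 × Fin 2) (Fin 2 × Fin 2) ℂ)
    (hρ : ρ.PosSemidef) (htr : ρ.trace = 1) (δ : ℝ) (hδ : 0 < δ) :
    (1 - δ ≤ expec ρ Omega →
      1 - δ ≤ (1 / 2) * (expec ρ pp + expec ρ mm)
              + (1 / 2) * (expec ρ (ket 0 0) + expec ρ (ket 1 1))) ∧
    ((1 - δ ≤ (1 / 2) * (expec ρ pp + expec ρ mm)
              + (1 / 2) * (expec ρ (ket 0 0) + expec ρ (ket 1 1))) →
      1 - 2 * δ ≤ expec ρ Omega) := by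
  have hu := expec_nonneg hρ (ket 0 0 - ket 1 1)
  have hw := expec_nonneg hρ (ket 0 1 + ket 1 0)
  have ht := expec_nonneg hρ (ket 0 1 - ket 1 0)
  have hsum := sum_expec_bell ρ
  rw [htr, Complex.one_re] at hsum
  rw [local_test_eq_bell, expec_Omega]
  constructor <;> intro h <;> linarith

end Stmt7
end
end

section
/- Let r ∈ ℕ, p ∈ [0,1], t ∈ ℝ, and let μ be a probability measure on the finite set {0,1}^r of sequences ω = (ω₁,…,ω_r). For i ∈ {1,…,r} and ȳ ∈ {0,1}^{i−1}, write E_{i,ȳ} := {ω : ω_j = ȳ_j for all j < i}. (1) If μ({ω : ω_i = 1} ∩ E_{i,ȳ}) ≤ p · μ(E_{i,ȳ}) for every i and every ȳ ∈ {0,1}^{i−1}, then μ({ω : Σ_{i=1}^r ω_i ≥ t}) ≤ Σ_{j ∈ ℕ, t ≤ j ≤ r} C(r,j) p^j (1−p)^{r−j}. (2) If instead μ({ω : ω_i = 1} ∩ E_{i,ȳ}) ≥ p · μ(E_{i,ȳ}) for every i and every ȳ, then μ({ω : Σ_{i=1}^r ω_i ≥ t}) ≥ Σ_{j ∈ ℕ,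 t ≤ j ≤ r} C(r,j) p^j (1−p)^{r−j}. -/
open MeasureTheory

/-- The expectation of `f` under the binomial distribution with parameters `n` and `p`. -/
noncomputable def binomialExpect (p : ℝ) (n : ℕ) (f : ℕ → ℝ) : ℝ :=
  ∑ j ∈ Finset.range (n + 1), (n.choose j : ℝ) * (p ^ j * (1 - p) ^ (n - j) * f j)

theorem binomialExpect_zero (p : ℝ) (f : ℕ → ℝ) : binomialExpect p 0 f = f 0 := by
  simp [binomialExpect]

theorem binomialExpect_succ (p : ℝ) (n : ℕ) (f : ℕ → ℝ) :
    binomialExpect p (n + 1) f =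
      p * binomialExpect p n (fun j => f (j + 1)) + (1 - p) * binomialExpect p n f := by
  have antidiagonal_form (m : ℕ) (g : ℕ → ℝ) : binomialExpect p m g =
      ∑ ij ∈ Finset.HasAntidiagonal.antidiagonal m,
        (m.choose ij.1 : ℝ) * (p ^ ij.1 * (1 - p) ^ ij.2 * g ij.1) :=
    (Finset.Nat.sum_antidiagonal_eq_sum_range_succ
      (fun i j => (m.choose i : ℝ) * (p ^ i * (1 - p) ^ j * g i)) m).symm
  simp only [antidiagonal_form]
  rw [Finset.sum_antidiagonal_choose_succ_mul (fun i j => p ^ i * (1 - p) ^ j * f i) n,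
    Finset.mul_sum, Finset.mul_sum, add_comm]
  congr 1
  · refine Finset.sum_congr rfl fun ij hij => ?_
    rw [← Finset.HasAntidiagonal.mem_antidiagonal.mp hij, Nat.choose_symm_add]
    ring
  · refine Finset.sum_congr rfl fun ij _ => ?_
    ring

theorem binomialExpect_mono {p : ℝ} (hp0 : 0 ≤ p) (hp1 : p ≤ 1) (n : ℕ) {f g : ℕ → ℝ}
    (h : ∀ j, f j ≤ g j) : binomialExpect p n f ≤ binomialExpect p n g := by
  have hq : 0 ≤ 1 - p := sub_nonneg.mpr hp1
  unfold binomialExpect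
  gcongr with j
  exact h j

/-- The sequences which agree with `y` in the first `k` coordinates. -/
def prefixCylinder {r : ℕ} (k : ℕ) (y : Fin r → Bool) : Set (Fin r → Bool) :=
  {ω | ∀ j : Fin r, (j : ℕ) < k → ω j = y j}

/-- The number of successes among the first `k` coordinates of `y`. -/
def prefixCount {r : ℕ} (k : ℕ) (y : Fin r → Bool) : ℕ :=
  ∑ j : Fin r, if (j : ℕ) < k ∧ y j = true then 1 else 0

theorem prefixCount_succ_update {r : ℕ} (i : Fin r) (y : Fin r → Bool) (b : Bool) :
    prefixCount (i + 1) (Function.update y i b) = prefixCount i y + b.toNat := by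
  have hb : b.toNat = ∑ j : Fin r, if j = i then b.toNat else 0 := by simp
  rw [hb, prefixCount, prefixCount, ← Finset.sum_add_distrib]
  refine Finset.sum_congr rfl fun j _ => ?_
  by_cases hji : j = i
  · subst hji
    cases b <;> simp
  · have hne : (j : ℕ) ≠ i := Fin.val_ne_of_ne hji
    have hlt : (j : ℕ) < i + 1 ↔ (j : ℕ) < i := by omega
    simp [hji, hlt]

theorem prefixCylinder_succ_update {r : ℕ} (i : Fin r) (y : Fin r → Bool) (b : Bool) :
    prefixCylinder (i + 1) (Function.update y i b) = {ω | ω i = b} ∩ prefixCylinder i y := by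
  ext ω
  simp only [prefixCylinder, Set.mem_ofPred_eq, Set.mem_inter_iff]
  refine ⟨fun h => ⟨by simpa using h i (Nat.lt_succ_self _), fun j hj => ?_⟩, fun h j hj => ?_⟩
  · have hji : j ≠ i := Fin.ne_of_lt hj
    simpa [hji] using h j (by omega)
  · by_cases hji : j = i
    · subst hji
      simpa using h.1
    · have hne : (j : ℕ) ≠ i := Fin.val_ne_of_ne hji
      simpa [hji] using h.2 j (by omega)

theorem measureReal_inter_prefixCylinder {r : ℕ} (μ : Measure (Fin r → Bool))
    [IsFiniteMeasure μ] (i : Fin r) (y : Fin r → Bool) (A : Set (Fin r → Bool)) :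
    μ.real (A ∩ prefixCylinder i y) =
      μ.real (A ∩ prefixCylinder (i + 1) (Function.update y i true)) +
        μ.real (A ∩ prefixCylinder (i + 1) (Function.update y i false)) := by
  rw [prefixCylinder_succ_update, prefixCylinder_succ_update,
    ← measureReal_inter_add_sdiff (s := A ∩ prefixCylinder i y)
      (Set.toFinite {ω : Fin r → Bool | ω i = true}).measurableSet]
  congr 2 <;> ext ω <;>
    simp only [Set.mem_inter_iff, Set.mem_sdiff, Set.mem_ofPred_eq, Bool.not_eq_true] <;> tauto

/-- Comparison with the binomial distribution conditionally on a prefix; the sign of `ε` selects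
the direction of the inequalities. -/
theorem mul_binomialExpect_sub_nonneg {r : ℕ} {p : ℝ} (hp0 : 0 ≤ p) (hp1 : p ≤ 1) (t ε : ℝ)
    (μ : Measure (Fin r → Bool)) [IsFiniteMeasure μ]
    (h : ∀ (i : Fin r) (y : Fin r → Bool), 0 ≤ ε * (p * μ.real (prefixCylinder i y) -
      μ.real ({ω | ω i = true} ∩ prefixCylinder i y)))
    (n k : ℕ) (hk : k + n = r) (y : Fin r → Bool) :
    0 ≤ ε * (binomialExpect p n (fun j => if t ≤ ((prefixCount k y + j : ℕ) : ℝ) then 1 else 0) *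
        μ.real (prefixCylinder k y) -
      μ.real ({ω | t ≤ (prefixCount r ω : ℝ)} ∩ prefixCylinder k y)) := by
  induction n generalizing k y with
  | zero =>
    obtain rfl : k = r := hk
    have hy : prefixCylinder k y = {y} := by
      ext ω
      simp [prefixCylinder, funext_iff]
    rw [binomialExpect_zero, hy]
    by_cases ht : t ≤ (prefixCount k y : ℝ)
    · rw [Set.inter_eq_right.mpr
        (show {y} ⊆ {ω | t ≤ (prefixCount k ω : ℝ)} by simpa using ht)]
      simp [ht]
    · rw [Set.inter_singleton_eq_empty.mpr
        (show y ∉ {ω | t ≤ (prefixCount k ω : ℝ)} by simpa using ht)]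
      simp [ht]
  | succ n ih =>
    obtain ⟨i, rfl⟩ : ∃ i : Fin r, (i : ℕ) = k := ⟨⟨k, by omega⟩, rfl⟩
    have success := ih (i + 1) (by omega) (Function.update y i true)
    have failure := ih (i + 1) (by omega) (Function.update y i false)
    have step := h i y
    have total := measureReal_inter_prefixCylinder μ i y Set.univ
    simp only [Set.univ_inter] at total
    rw [← prefixCylinder_succ_update, total] at step
    rw [measureReal_inter_prefixCylinder, total, binomialExpect_succ]
    simp only [prefixCount_succ_update, Bool.toNat_true, Bool.toNat_false, add_zero]
      at success failure
    have shift : ∀ j, prefixCount i y + 1 + j = prefixCount i y + (j + 1) := fun j => by ring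
    simp only [shift] at success
    have mono := binomialExpect_mono hp0 hp1 n
      (f := fun j => if t ≤ ((prefixCount i y + j : ℕ) : ℝ) then 1 else 0)
      (g := fun j => if t ≤ ((prefixCount i y + (j + 1) : ℕ) : ℝ) then 1 else 0) (fun j => by
        have hle : ((prefixCount i y + j : ℕ) : ℝ) ≤ ((prefixCount i y + (j + 1) : ℕ) : ℝ) := by
          exact_mod_cast (by omega)
        split_ifs with h₁ h₂
        · exact le_rfl
        · exact absurd (h₁.trans hle) h₂
        · exact zero_le_one
        · exact le_rfl)
    linear_combination success + failure + mul_nonneg (sub_nonneg.mpr mono) step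

theorem mul_binomialTail_sub_nonneg {r : ℕ} {p : ℝ} (hp0 : 0 ≤ p) (hp1 : p ≤ 1) (t ε : ℝ)
    (μ : Measure (Fin r → Bool)) [IsProbabilityMeasure μ]
    (h : ∀ (i : Fin r) (y : Fin r → Bool), 0 ≤ ε * (p * μ.real {ω | ∀ j, j < i → ω j = y j} -
      μ.real ({ω | ω i = true} ∩ {ω | ∀ j, j < i → ω j = y j}))) :
    0 ≤ ε * ((∑ j ∈ Finset.range (r + 1),
        if t ≤ (j : ℝ) then (r.choose j : ℝ) * p ^ j * (1 - p) ^ (r - j) else 0) -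
      μ.real {ω | t ≤ ∑ i, (if ω i then (1 : ℝ) else 0)}) := by
  have key := mul_binomialExpect_sub_nonneg hp0 hp1 t ε μ h r 0 (zero_add r) (fun _ => false)
  have cylinder : prefixCylinder 0 (fun _ : Fin r => false) = Set.univ := by
    simp [prefixCylinder]
  simpa [cylinder, prefixCount, binomialExpect, mul_assoc] using key

/-- comparison of a {0,1}-valued discrete-time process whose conditional
success probabilities are bounded by `p` with an i.i.d. Bernoulli(p) sequence, for the
tail of the sum. -/
theorem stmt_11 (r : ℕ) (p : ℝ) (hp0 : 0 ≤ p) (hp1 : p ≤ 1) (t : ℝ)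
    (μ : Measure (Fin r → Bool)) [IsProbabilityMeasure μ] :
    ((∀ (i : Fin r) (y : Fin r → Bool),
        μ ({ω | ω i = true} ∩ {ω | ∀ j, j < i → ω j = y j}) ≤
          ENNReal.ofReal p * μ {ω | ∀ j, j < i → ω j = y j}) →
      μ {ω | t ≤ ∑ i, (if ω i then (1 : ℝ) else 0)} ≤
        ENNReal.ofReal (∑ j ∈ Finset.range (r + 1),
          if t ≤ (j : ℝ) then (r.choose j : ℝ) * p ^ j * (1 - p) ^ (r - j) else 0)) ∧
    ((∀ (i : Fin r) (y : Fin r → Bool),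
        ENNReal.ofReal p * μ {ω | ∀ j, j < i → ω j = y j} ≤
          μ ({ω | ω i = true} ∩ {ω | ∀ j, j < i → ω j = y j})) →
      ENNReal.ofReal (∑ j ∈ Finset.range (r + 1),
          if t ≤ (j : ℝ) then (r.choose j : ℝ) * p ^ j * (1 - p) ^ (r - j) else 0) ≤
        μ {ω | t ≤ ∑ i, (if ω i then (1 : ℝ) else 0)}) := by
  constructor
  · intro h
    have key := mul_binomialTail_sub_nonneg hp0 hp1 t 1 μ fun i y => by
      have hiy := ENNReal.toReal_mono (by finiteness) (h i y)
      rw [ENNReal.toReal_mul, ENNReal.toReal_ofReal hp0] at hiy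
      rw [one_mul]
      exact sub_nonneg.mpr hiy
    rw [one_mul, sub_nonneg] at key
    rw [← ofReal_measureReal]
    exact ENNReal.ofReal_le_ofReal key
  · intro h
    have key := mul_binomialTail_sub_nonneg hp0 hp1 t (-1) μ fun i y => by
      have hiy := ENNReal.toReal_mono (by finiteness) (h i y)
      rw [ENNReal.toReal_mul, ENNReal.toReal_ofReal hp0] at hiy
      rw [neg_one_mul, neg_sub]
      exact sub_nonneg.mpr hiy
    rw [neg_one_mul, neg_sub, sub_nonneg] at key
    rw [← ofReal_measureReal (μ := μ)]
    exact ENNReal.ofReal_le_ofReal key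
end
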